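/- arXiv:1807.05803 — 4 statements merged into one kernel-verified Lean document; each statement's English description precedes it below -/
import Mathlib

section
/- Let G be a directed multigraph and let s, t be distinct vertices. Then there is exactly one s-t min-cut that is an s-t-latest cut; that is, there is a unique s-t min-cut M such that no s-t cut M' satisfies M' > M and |M'| ≤ |M|. -/
/-!
The arcs entering a vertex set `T` with `s ∉ T` and `t ∈ T` form an `s`-`t` cut, and every min-cut
`M` arises in this way from its target side `T_M`, so it is determined by `T_M`. A min-cut is latest
exactly when its target side is inclusion-minimal among those of min-cuts. The number of arcs
entering `T` is submodular in `T`; hence, for min-cuts `M` and `N`, the arcs entering `T_M ∩ T_N`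
form a min-cut, whose target side lies in `T_M ∩ T_N`. So a minimal target side is the least one.
-/

namespace APMC

/-- `Walk tl hd s t p` : the list of arcs `p` forms a path from `s` to `t` in the
directed multigraph with tail map `tl` and head map `hd`
(the empty path goes from a vertex to itself). -/
inductive Walk {V E : Type} (tl hd : E → V) : V → V → List E → Prop
  | nil (v : V) : Walk tl hd v v []
  | cons (e : E) {v : V} {p : List E} :
      Walk tl hd (hd e) v p → Walk tl hd (tl e) v (e :: p)

variable {V E : Type}

/-- A walk from `s` to `t` using only arcs from `A`. -/
def WalkIn (tl hd : E → V) (A : Set E) (s t : V) (p : List E) : Prop :=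
  Walk tl hd s t p ∧ ∀ e ∈ p, e ∈ A

/-- `t` is reachable from `s` in `(V, A)`. -/
def Reaches (tl hd : E → V) (A : Set E) (s t : V) : Prop :=
  ∃ p, WalkIn tl hd A s t p

/-- `M` is an `s`-`t` cut in `(V, A)`: every path from `s` to `t` within `A`
contains an arc of `M`. -/
def IsCutIn (tl hd : E → V) (A : Set E) (s t : V) (M : Set E) : Prop :=
  ∀ p, WalkIn tl hd A s t p → ∃ e ∈ p, e ∈ M

/-- The target side `T_M` of a cut `M`: vertices admitting a path to `t` avoiding `M`. -/
def targetSide (tl hd : E → V) (A : Set E) (t : V) (M : Set E) : Set V :=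
  {x | ∃ p, WalkIn tl hd A x t p ∧ ∀ e ∈ p, e ∉ M}

/-- The source side `S_M` of a cut `M`: vertices admitting a path from `s` avoiding `M`. -/
def sourceSide (tl hd : E → V) (A : Set E) (s : V) (M : Set E) : Set V :=
  {x | ∃ p, WalkIn tl hd A s x p ∧ ∀ e ∈ p, e ∉ M}

/-- `M` is an `s`-`t` min-cut in `(V, A)`: a cut of minimum cardinality. -/
def IsMinCutIn (tl hd : E → V) (A : Set E) (s t : V) (M : Set E) : Prop :=
  IsCutIn tl hd A s t M ∧ ∀ M' : Set E, IsCutIn tl hd A s t M' → M.ncard ≤ M'.ncard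

/-- `M` is a minimal `s`-`t` cut in `(V, A)`: no proper subset of `M` is a cut. -/
def IsMinimalCutIn (tl hd : E → V) (A : Set E) (s t : V) (M : Set E) : Prop :=
  IsCutIn tl hd A s t M ∧ ∀ M' : Set E, M' ⊂ M → ¬ IsCutIn tl hd A s t M'

/-- `StrictLater ... M M'` means `M > M'`, i.e. `T_M ⊆ T_{M'}` and `T_M ≠ T_{M'}`. -/
def StrictLater (tl hd : E → V) (A : Set E) (t : V) (M M' : Set E) : Prop :=
  targetSide tl hd A t M ⊆ targetSide tl hd A t M' ∧
    targetSide tl hd A t M ≠ targetSide tl hd A t M'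

/-- `StrictEarlier ... M M'` means `M < M'`, i.e. `S_M ⊆ S_{M'}` and `S_M ≠ S_{M'}`. -/
def StrictEarlier (tl hd : E → V) (A : Set E) (s : V) (M M' : Set E) : Prop :=
  sourceSide tl hd A s M ⊆ sourceSide tl hd A s M' ∧
    sourceSide tl hd A s M ≠ sourceSide tl hd A s M'

/-- `M` is an `s`-`t`-latest cut in `(V, A)`:
no `s`-`t` cut `M'` satisfies `M' > M` and `|M'| ≤ |M|`. -/
def IsLatestIn (tl hd : E → V) (A : Set E) (s t : V) (M : Set E) : Prop :=
  IsCutIn tl hd A s t M ∧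
    ¬ ∃ M' : Set E, IsCutIn tl hd A s t M' ∧ StrictLater tl hd A t M' M ∧
      M'.ncard ≤ M.ncard

/-- `M` is an `s`-`t`-earliest cut in `(V, A)`:
no `s`-`t` cut `M'` satisfies `M' < M` and `|M'| ≤ |M|`. -/
def IsEarliestIn (tl hd : E → V) (A : Set E) (s t : V) (M : Set E) : Prop :=
  IsCutIn tl hd A s t M ∧
    ¬ ∃ M' : Set E, IsCutIn tl hd A s t M' ∧ StrictEarlier tl hd A s M' M ∧
      M'.ncard ≤ M.ncard

/-- `A₁, A₂` is an arc split of the arc set: a partition of the arcs such that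
no arc of `A₁` starts where an arc of `A₂` ends. -/
def ArcSplit (tl hd : E → V) (A₁ A₂ : Set E) : Prop :=
  A₁ ∪ A₂ = Set.univ ∧ A₁ ∩ A₂ = ∅ ∧
    ∀ e₁ ∈ A₂, ∀ e₂ ∈ A₁, hd e₁ ≠ tl e₂

/-- `M` is split-covering with respect to the arc split `A₁, A₂` and vertices `s`, `t`. -/
def SplitCovering (tl hd : E → V) (A₁ A₂ : Set E) (s t : V) (M : Set E) : Prop :=
  ∀ v : V, ∃ Mv ⊆ M,
    ((s ≠ v ∧ v ≠ t ∧ (¬ Reaches tl hd A₁ s v ∨ ¬ Reaches tl hd A₂ v t)) ∨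
     IsEarliestIn tl hd A₁ s v Mv ∨
     IsLatestIn tl hd A₂ v t Mv)

/-- `M` is late-covering with respect to the `s`-`t` cut `C`. -/
def LateCovering (tl hd : E → V) (t : V) (C M : Set E) : Prop :=
  ∀ e ∈ C, e ∈ M ∨ ∃ M' ⊆ M, IsLatestIn tl hd Set.univ (hd e) t M'

end APMC

open APMC

namespace APMC

variable {V E : Type} {tl hd : E → V} {A : Set E} {s t : V} {M N : Set E} {T : Set V}

/-- The arcs of the subgraph `(V, A)` that enter the vertex set `T`. The cuts of this form are the
ones determined by a vertex set, through which cuts are compared and combined. -/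
def entering (tl hd : E → V) (A : Set E) (T : Set V) : Set E :=
  {e ∈ A | tl e ∉ T ∧ hd e ∈ T}

theorem WalkIn.exists_mem_entering {x y : V} {p : List E} (hp : WalkIn tl hd A x y p)
    (hx : x ∉ T) (hy : y ∈ T) : ∃ e ∈ p, e ∈ entering tl hd A T := by
  obtain ⟨hwalk, hA⟩ := hp
  induction hwalk with
  | nil => exact absurd hy hx
  | cons e _ ih =>
    rw [List.forall_mem_cons] at hA
    rw [List.exists_mem_cons_iff]
    by_cases he : hd e ∈ T
    · exact .inl ⟨hA.1, hx, he⟩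
    · exact .inr (ih he hy hA.2)

theorem isCutIn_entering (hs : s ∉ T) (ht : t ∈ T) : IsCutIn tl hd A s t (entering tl hd A T) :=
  fun _ hp => hp.exists_mem_entering hs ht

theorem targetSide_entering_subset (ht : t ∈ T) :
    targetSide tl hd A t (entering tl hd A T) ⊆ T := by
  rintro x ⟨p, hp, havoid⟩
  by_contra hx
  obtain ⟨e, hep, he⟩ := hp.exists_mem_entering hx ht
  exact havoid e hep he

theorem encard_entering_inter_add_encard_entering_union_le (T₁ T₂ : Set V) :
    (entering tl hd A (T₁ ∩ T₂)).encard + (entering tl hd A (T₁ ∪ T₂)).encard ≤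
      (entering tl hd A T₁).encard + (entering tl hd A T₂).encard := by
  have hunion : entering tl hd A (T₁ ∩ T₂) ∪ entering tl hd A (T₁ ∪ T₂) ⊆
      entering tl hd A T₁ ∪ entering tl hd A T₂ := by
    intro e
    simp only [entering, Set.mem_union, Set.mem_inter_iff, Set.mem_ofPred_eq]
    tauto
  have hinter : entering tl hd A (T₁ ∩ T₂) ∩ entering tl hd A (T₁ ∪ T₂) ⊆
      entering tl hd A T₁ ∩ entering tl hd A T₂ := by
    intro e
    simp only [entering, Set.mem_union, Set.mem_inter_iff, Set.mem_ofPred_eq]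
    tauto
  rw [← Set.encard_union_add_encard_inter,
    ← Set.encard_union_add_encard_inter (entering tl hd A T₁)]
  exact add_le_add (Set.encard_le_encard hunion) (Set.encard_le_encard hinter)

theorem self_mem_targetSide : t ∈ targetSide tl hd A t M :=
  ⟨[], ⟨.nil t, List.forall_mem_nil _⟩, List.forall_mem_nil _⟩

theorem IsCutIn.notMem_targetSide (hM : IsCutIn tl hd A s t M) : s ∉ targetSide tl hd A t M := by
  rintro ⟨p, hp, havoid⟩
  obtain ⟨e, hep, heM⟩ := hM p hp
  exact havoid e hep heM

theorem tl_mem_targetSide {e : E} (heA : e ∈ A) (heM : e ∉ M)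
    (he : hd e ∈ targetSide tl hd A t M) : tl e ∈ targetSide tl hd A t M := by
  obtain ⟨p, ⟨hwalk, hA⟩, havoid⟩ := he
  exact ⟨e :: p, ⟨.cons e hwalk, List.forall_mem_cons.2 ⟨heA, hA⟩⟩,
    List.forall_mem_cons.2 ⟨heM, havoid⟩⟩

theorem entering_targetSide_subset : entering tl hd A (targetSide tl hd A t M) ⊆ M := by
  rintro e ⟨heA, htl, hhd⟩
  by_contra heM
  exact htl (tl_mem_targetSide heA heM hhd)

theorem exists_isMinCutIn (hst : s ≠ t) : ∃ M, IsMinCutIn tl hd A s t M := by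
  have hcut : IsCutIn tl hd A s t (entering tl hd A {t}) := isCutIn_entering hst rfl
  obtain ⟨M, hM⟩ := exists_minimalFor_of_wellFoundedLT (IsCutIn tl hd A s t) Set.ncard ⟨_, hcut⟩
  exact ⟨M, hM.prop, fun _ hN => hM.le hN⟩

namespace IsMinCutIn

theorem of_ncard_le (hM : IsMinCutIn tl hd A s t M) (hN : IsCutIn tl hd A s t N)
    (hNM : N.ncard ≤ M.ncard) : IsMinCutIn tl hd A s t N :=
  ⟨hN, fun C hC => hNM.trans (hM.2 C hC)⟩

theorem entering_targetSide [Finite E] (hM : IsMinCutIn tl hd A s t M) :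
    entering tl hd A (targetSide tl hd A t M) = M :=
  Set.eq_of_subset_of_ncard_le entering_targetSide_subset
    (hM.2 _ (isCutIn_entering hM.1.notMem_targetSide self_mem_targetSide))

theorem eq_of_targetSide_eq [Finite E] (hM : IsMinCutIn tl hd A s t M)
    (hN : IsMinCutIn tl hd A s t N) (h : targetSide tl hd A t M = targetSide tl hd A t N) :
    M = N := by
  rw [← hM.entering_targetSide, h, hN.entering_targetSide]

theorem entering_inter_targetSide [Finite E] (hM : IsMinCutIn tl hd A s t M)
    (hN : IsMinCutIn tl hd A s t N) :
    IsMinCutIn tl hd A s t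
      (entering tl hd A (targetSide tl hd A t M ∩ targetSide tl hd A t N)) := by
  have hsM := hM.1.notMem_targetSide
  have hsN := hN.1.notMem_targetSide
  have hsub := encard_entering_inter_add_encard_entering_union_le (tl := tl) (hd := hd) (A := A)
    (targetSide tl hd A t M) (targetSide tl hd A t N)
  simp only [hM.entering_targetSide, hN.entering_targetSide,
    ← (Set.toFinite _).cast_ncard_eq, ← Nat.cast_add, Nat.cast_le] at hsub
  have hunion : N.ncard ≤
      (entering tl hd A (targetSide tl hd A t M ∪ targetSide tl hd A t N)).ncard :=
    hN.2 _ (isCutIn_entering (not_or.2 ⟨hsM, hsN⟩) (Set.mem_union_left _ self_mem_targetSide))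
  refine hM.of_ncard_le (isCutIn_entering (fun hs => hsM hs.1)
    ⟨self_mem_targetSide, self_mem_targetSide⟩) ?_
  lia

end IsMinCutIn

theorem isMinCutIn_and_isLatestIn_iff_minimalFor_targetSide :
    IsMinCutIn tl hd A s t M ∧ IsLatestIn tl hd A s t M ↔
      MinimalFor (IsMinCutIn tl hd A s t) (targetSide tl hd A t) M := by
  constructor
  · rintro ⟨hM, -, hlatest⟩
    refine ⟨hM, fun N hN hNM => ?_⟩
    by_contra hMN
    exact hlatest ⟨N, hN.1, ⟨hNM, fun h => hMN h.ge⟩, hN.2 M hM.1⟩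
  · rintro ⟨hM, hmin⟩
    refine ⟨hM, hM.1, ?_⟩
    rintro ⟨N, hN, ⟨hNM, hne⟩, hcard⟩
    exact hne (hNM.antisymm (hmin (hM.of_ncard_le hN hcard) hNM))

theorem targetSide_subset_of_minimalFor [Finite E]
    (hM : MinimalFor (IsMinCutIn tl hd A s t) (targetSide tl hd A t) M)
    (hN : IsMinCutIn tl hd A s t N) : targetSide tl hd A t M ⊆ targetSide tl hd A t N := by
  have hsub := targetSide_entering_subset (tl := tl) (hd := hd) (A := A) (t := t)
    (T := targetSide tl hd A t M ∩ targetSide tl hd A t N)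
    ⟨self_mem_targetSide, self_mem_targetSide⟩
  have hle := hM.2 (hM.1.entering_inter_targetSide hN) (hsub.trans Set.inter_subset_left)
  exact hle.trans (hsub.trans Set.inter_subset_right)

end APMC

theorem unique_latest_min_cut_general {V E : Type} [Finite E]
    (tl hd : E → V) (A : Set E) (s t : V) (hst : s ≠ t) :
    ∃! M : Set E, IsMinCutIn tl hd A s t M ∧ IsLatestIn tl hd A s t M := by
  simp only [isMinCutIn_and_isLatestIn_iff_minimalFor_targetSide]
  obtain ⟨M, hM⟩ := (Set.toFinite {M | IsMinCutIn tl hd A s t M}).exists_minimalFor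
    (targetSide tl hd A t) _ (exists_isMinCutIn hst)
  refine ⟨M, hM, fun N hN => hN.1.eq_of_targetSide_eq hM.1 ?_⟩
  exact (targetSide_subset_of_minimalFor hN hM.1).antisymm (targetSide_subset_of_minimalFor hM hN.1)

/-- There is exactly one `s`-`t` min-cut that is an `s`-`t`-latest cut. -/
theorem unique_latest_min_cut {V E : Type} [Fintype V] [Fintype E]
    (tl hd : E → V) (s t : V) (hst : s ≠ t) :
    ∃! M : Set E, IsMinCutIn tl hd Set.univ s t M ∧ IsLatestIn tl hd Set.univ s t M :=
  unique_latest_min_cut_general tl hd Set.univ s t hst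
end

section
/- For every k ≥ 1 there exist a directed multigraph G and distinct vertices s, t such that the number of s-t-latest s-t k-cuts is exactly the Catalan number C_{k-1} = (1/k)·binom(2k-2, k-1); i.e., the Catalan bound on the number of s-t-latest k-cuts is tight. -/
open APMC

namespace APMC

section Multigraph

variable {V E : Type} {tl hd : E → V} {A : Set E} {s t x : V} {e : E} {M M' : Set E}

theorem mem_targetSide_iff :
    x ∈ targetSide tl hd A t M ↔
      x = t ∨ ∃ e ∈ A, tl e = x ∧ e ∉ M ∧ hd e ∈ targetSide tl hd A t M := by
  constructor
  · rintro ⟨_, ⟨hw, hA⟩, hM⟩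
    cases hw with
    | nil => exact Or.inl rfl
    | cons e hw =>
      simp only [List.forall_mem_cons] at hA hM
      exact Or.inr ⟨e, hA.1, rfl, hM.1, _, ⟨hw, hA.2⟩, hM.2⟩
  · rintro (rfl | ⟨e, heA, rfl, heM, p, ⟨hw, hA⟩, hM⟩)
    · exact ⟨[], ⟨.nil _, by simp⟩, by simp⟩
    · exact ⟨e :: p, ⟨.cons e hw, List.forall_mem_cons.2 ⟨heA, hA⟩⟩,
        List.forall_mem_cons.2 ⟨heM, hM⟩⟩

theorem isCutIn_iff_notMem_targetSide :
    IsCutIn tl hd A s t M ↔ s ∉ targetSide tl hd A t M := by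
  simp [IsCutIn, targetSide]

/-- `M` blocks the arc `e` if no path to `t` whose first arc is `e` avoids `M`. -/
def Blocks (tl hd : E → V) (A : Set E) (t : V) (M : Set E) (e : E) : Prop :=
  e ∈ M ∨ hd e ∉ targetSide tl hd A t M

theorem notMem_targetSide_iff :
    x ∉ targetSide tl hd A t M ↔ x ≠ t ∧ ∀ e ∈ A, tl e = x → Blocks tl hd A t M e := by
  rw [mem_targetSide_iff]
  simp only [Blocks, not_or, not_exists, not_and, or_iff_not_imp_left (b := hd _ ∉ _)]

theorem targetSide_sdiff_singleton_subset (he : tl e ∈ targetSide tl hd A t M) :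
    targetSide tl hd A t (M \ {e}) ⊆ targetSide tl hd A t M := by
  rintro x ⟨p, ⟨hw, hA⟩, hM⟩
  induction hw with
  | nil => exact mem_targetSide_iff.2 (Or.inl rfl)
  | cons f _ ih =>
    simp only [List.forall_mem_cons] at hA hM
    by_cases hf : f = e
    · rwa [hf]
    · exact mem_targetSide_iff.2
        (Or.inr ⟨f, hA.1, rfl, fun hfM => hM.1 ⟨hfM, hf⟩, ih he hM.2 hA.2⟩)

theorem IsMinimalCutIn.tail_notMem_targetSide (hM : IsMinimalCutIn tl hd A s t M) (he : e ∈ M) :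
    tl e ∉ targetSide tl hd A t M := fun h =>
  hM.2 (M \ {e}) (Set.sdiff_singleton_ssubset.2 he) <|
    isCutIn_iff_notMem_targetSide.2 fun hs =>
      isCutIn_iff_notMem_targetSide.1 hM.1 (targetSide_sdiff_singleton_subset h hs)

theorem IsMinimalCutIn.blocks_of_targetSide_subset (hM : IsMinimalCutIn tl hd A s t M)
    (h : targetSide tl hd A t M' ⊆ targetSide tl hd A t M) (he : e ∈ M) (heA : e ∈ A) :
    Blocks tl hd A t M' e :=
  (notMem_targetSide_iff.1 fun h' => hM.tail_notMem_targetSide he (h h')).2 e heA rfl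

end Multigraph

section LeafWords

variable {α : Type*}

/-- The positions of the leaves of a binary tree.  A position is the word of turns leading to it
from the root, the first turn first, where `false` stands for left and `true` for right. -/
def leafWords : BinaryTree α → Finset (List Bool)
  | .nil => {[]}
  | .node _ l r => (leafWords l).image (List.cons false) ∪ (leafWords r).image (List.cons true)

theorem forall_mem_leafWords_node {x : α} {l r : BinaryTree α} {p : List Bool → Prop} :
    (∀ a ∈ leafWords (.node x l r), p a) ↔
      (∀ a ∈ leafWords l, p (false :: a)) ∧ ∀ a ∈ leafWords r, p (true :: a) := by
  simp [leafWords, or_imp, forall_and]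

theorem leafWords_nonempty (T : BinaryTree α) : (leafWords T).Nonempty := by
  induction T with
  | nil => simp [leafWords]
  | node _ _ _ ihl _ => exact (ihl.image _).inl

theorem card_leafWords (T : BinaryTree α) : (leafWords T).card = T.numLeaves := by
  induction T with
  | nil => simp [leafWords]
  | node _ l r ihl ihr =>
    have hdisj : Disjoint ((leafWords l).image (List.cons false))
        ((leafWords r).image (List.cons true)) := by
      simp [Finset.disjoint_left]
    rw [leafWords, Finset.card_union_of_disjoint hdisj,
      Finset.card_image_of_injective _ List.cons_injective,
      Finset.card_image_of_injective _ List.cons_injective, ihl, ihr, BinaryTree.numLeaves]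

theorem height_le_iff_forall_length_le {T : BinaryTree α} {D : ℕ} :
    T.height ≤ D ↔ ∀ a ∈ leafWords T, a.length ≤ D := by
  induction T generalizing D with
  | nil => simp [leafWords]
  | node _ l r ihl ihr =>
    rw [forall_mem_leafWords_node]
    cases D with
    | zero =>
      obtain ⟨a, ha⟩ := leafWords_nonempty l
      simpa using fun h => absurd ha (h a)
    | succ D => simp [ihl, ihr]

theorem eq_of_leafWords_subset {T T' : BinaryTree Unit} (h : leafWords T' ⊆ leafWords T) :
    T' = T := by
  induction T generalizing T' with
  | nil =>
    cases T' with
    | nil => rfl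
    | node _ l _ =>
      obtain ⟨a, ha⟩ := leafWords_nonempty l
      simpa [leafWords] using (forall_mem_leafWords_node.1 h).1 a ha
  | node _ l r ihl ihr =>
    cases T' with
    | nil => simp [leafWords] at h
    | node _ l' r' =>
      obtain ⟨hl, hr⟩ := forall_mem_leafWords_node.1 h
      obtain rfl : l' = l := ihl fun a ha => by simpa [leafWords] using hl a ha
      obtain rfl : r' = r := ihr fun a ha => by simpa [leafWords] using hr a ha
      rfl

/-- The set `A` of positions contains the leaves of some binary tree planted at the position `w`;
that is, every sufficiently long descending path from `w` meets `A`. -/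
def Covers (A : Set (List Bool)) (w : List Bool) : Prop :=
  ∃ T : BinaryTree Unit, ∀ a ∈ leafWords T, w ++ a ∈ A

theorem covers_iff {A : Set (List Bool)} {w : List Bool} :
    Covers A w ↔ w ∈ A ∨ ∀ b, Covers A (w ++ [b]) := by
  constructor
  · rintro ⟨T, hT⟩
    cases T with
    | nil => simpa [leafWords] using Or.inl hT
    | node _ l r =>
      obtain ⟨hl, hr⟩ := forall_mem_leafWords_node.1 hT
      exact Or.inr (Bool.forall_bool.2 ⟨⟨l, by simpa using hl⟩, ⟨r, by simpa using hr⟩⟩)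
  · rintro (hw | h)
    · exact ⟨.nil, by simpa [leafWords] using hw⟩
    · obtain ⟨⟨l, hl⟩, r, hr⟩ := Bool.forall_bool.1 h
      exact ⟨.node () l r, forall_mem_leafWords_node.2 ⟨by simpa using hl, by simpa using hr⟩⟩

theorem Covers.exists_append_mem {A : Set (List Bool)} {w : List Bool} (h : Covers A w) :
    ∃ a, w ++ a ∈ A := by
  obtain ⟨T, hT⟩ := h
  obtain ⟨a, ha⟩ := leafWords_nonempty T
  exact ⟨a, hT a ha⟩

/-- `T'` arises from `T` by grafting a covering tree onto each leaf. -/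
theorem exists_leafWords_subset_of_forall_covers {T : BinaryTree Unit} {A : Set (List Bool)}
    (h : ∀ a ∈ leafWords T, Covers A a) :
    ∃ T' : BinaryTree Unit, ↑(leafWords T') ⊆ A ∧ (T' = T ∨ T.numNodes < T'.numNodes) := by
  induction T generalizing A with
  | nil =>
    obtain ⟨T', hT'⟩ : Covers A [] := h [] (by simp [leafWords])
    refine ⟨T', hT', ?_⟩
    cases T' <;> simp
  | node _ l r ihl ihr =>
    obtain ⟨hl, hr⟩ := forall_mem_leafWords_node.1 h
    obtain ⟨l', hl', hl_eq_or⟩ := ihl (A := List.cons false ⁻¹' A) hl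
    obtain ⟨r', hr', hr_eq_or⟩ := ihr (A := List.cons true ⁻¹' A) hr
    refine ⟨.node () l' r', forall_mem_leafWords_node.2 ⟨hl', hr'⟩, ?_⟩
    simp only [BinaryTree.numNodes, BinaryTree.node.injEq, true_and]
    grind

end LeafWords

namespace TreeGraph

/-- Arcs of the tree graph of depth `D`.  The word is the tree position which the arc enters; the
empty word is the arc from the source into the root. -/
abbrev Arc (D : ℕ) : Type := {w : List Bool // w.length ≤ D}

/-- Vertices of the tree graph of depth `D`: besides the source and the sink, the tree positions
above depth `D`; those at depth `D` are merged into the sink. -/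
inductive Vertex (D : ℕ) : Type
  | source
  | sink
  | node (w : List Bool) (hw : w.length < D)

open Vertex

variable {D : ℕ}

instance : Finite (Arc D) := List.finite_length_le Bool D

instance : Finite (Vertex D) := by
  have : Finite {w : List Bool // w.length < D} := List.finite_length_lt Bool D
  let f : Option (Option {w : List Bool // w.length < D}) → Vertex D :=
    fun o => o.elim source fun o => o.elim sink fun w => node w.1 w.2
  refine .of_surjective f ?_
  rintro (_ | _ | ⟨w, hw⟩)
  exacts [⟨none, rfl⟩, ⟨some none, rfl⟩, ⟨some (some ⟨w, hw⟩), rfl⟩]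

/-- The vertex at the tree position `w`.  A word longer than `D` is not a position and is sent to
the sink like those of length `D`. -/
def position (w : List Bool) : Vertex D :=
  if hw : w.length < D then node w hw else sink

/-- The tail of an arc of the tree graph: the parent of the position it enters. -/
def tail (e : Arc D) : Vertex D :=
  if e.1 = [] then source else position e.1.dropLast

/-- The head of an arc of the tree graph: the position it enters. -/
def head (e : Arc D) : Vertex D :=
  position e.1

theorem position_ne_source (w : List Bool) : (position w : Vertex D) ≠ source := by
  unfold position
  split_ifs <;> simp

theorem position_ne_sink {w : List Bool} (hw : w.length < D) : (position w : Vertex D) ≠ sink := by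
  simp [position, hw]

theorem position_eq_sink {w : List Bool} (hw : D ≤ w.length) : (position w : Vertex D) = sink := by
  simp [position, hw]

theorem position_inj {v w : List Bool} (hv : v.length < D) (hw : w.length < D) :
    (position v : Vertex D) = position w ↔ v = w := by
  simp [position, hv, hw]

theorem tail_eq_source_iff {e : Arc D} : tail e = source ↔ e.1 = [] := by
  simp [tail, position_ne_source]

theorem tail_eq_position_iff {e : Arc D} {w : List Bool} (hw : w.length < D) :
    tail e = position w ↔ ∃ b, e.1 = w ++ [b] := by
  obtain ⟨v, hv⟩ := e
  rcases List.eq_nil_or_concat' v with rfl | ⟨u, b, rfl⟩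
  · simp [tail, (position_ne_source w).symm]
  · rw [List.length_append] at hv
    simp [tail, position_inj hv hw]

variable {M : Set (Arc D)}

theorem blocks_iff_mem {e : Arc D} (he : e.1.length = D) :
    Blocks tail head Set.univ sink M e ↔ e ∈ M := by
  have hsink : head e ∈ targetSide tail head Set.univ sink M :=
    mem_targetSide_iff.2 (Or.inl (position_eq_sink he.ge))
  simp [Blocks, hsink]

theorem blocks_iff_mem_or_forall {e : Arc D} (he : e.1.length < D) :
    Blocks tail head Set.univ sink M e ↔
      e ∈ M ∨ ∀ b, Blocks tail head Set.univ sink M ⟨e.1 ++ [b], by simpa using he⟩ := by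
  refine or_congr_right (notMem_targetSide_iff.trans ?_)
  constructor
  · exact fun h b => h.2 _ (Set.mem_univ _) ((tail_eq_position_iff he).2 ⟨b, rfl⟩)
  · refine fun h => ⟨position_ne_sink he, ?_⟩
    rintro ⟨_, _⟩ - hf
    obtain ⟨b, rfl⟩ := (tail_eq_position_iff he).1 hf
    exact h b

theorem blocks_iff_covers (e : Arc D) :
    Blocks tail head Set.univ sink M e ↔ Covers (Subtype.val '' M) e.1 := by
  have hmem : e.1 ∈ Subtype.val '' M ↔ e ∈ M := Subtype.val_injective.mem_set_image
  rw [covers_iff, hmem]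
  rcases e.2.lt_or_eq with he | he
  · rw [blocks_iff_mem_or_forall he]
    exact or_congr_right (forall_congr' fun b => blocks_iff_covers ⟨e.1 ++ [b], _⟩)
  · have hnot (b : Bool) : ¬ Covers (Subtype.val '' M) (e.1 ++ [b]) := by
      intro h
      obtain ⟨a, f, -, hf⟩ := h.exists_append_mem
      have hlength := f.2
      simp [hf, he] at hlength
    simp [blocks_iff_mem he, hnot]
termination_by D - e.1.length
decreasing_by simp only [List.length_append, List.length_singleton]; omega

theorem isCutIn_iff_covers_nil :
    IsCutIn tail head Set.univ source sink M ↔ Covers (Subtype.val '' M) [] := by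
  rw [isCutIn_iff_notMem_targetSide, notMem_targetSide_iff,
    ← blocks_iff_covers ⟨[], Nat.zero_le _⟩]
  constructor
  · exact fun h => h.2 _ (Set.mem_univ _) rfl
  · refine fun h => ⟨nofun, ?_⟩
    rintro ⟨w, _⟩ - he
    obtain rfl : w = [] := tail_eq_source_iff.1 he
    exact h

/-- The set of arcs of the tree graph which enter the leaves of `T`, planted at its root. -/
def leafCut (D : ℕ) (T : BinaryTree Unit) : Set (Arc D) :=
  {e | e.1 ∈ leafWords T}

theorem image_leafCut {T : BinaryTree Unit} (hT : T.height ≤ D) :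
    Subtype.val '' leafCut D T = leafWords T :=
  Subtype.coe_image_of_subset (height_le_iff_forall_length_le.1 hT)

theorem leafWords_subset_image_iff {T : BinaryTree Unit} :
    ↑(leafWords T) ⊆ Subtype.val '' M ↔ T.height ≤ D ∧ leafCut D T ⊆ M := by
  constructor
  · intro h
    have hT : T.height ≤ D := by
      refine height_le_iff_forall_length_le.2 fun a ha => ?_
      obtain ⟨e, -, rfl⟩ := h ha
      exact e.2
    rw [← image_leafCut hT, Set.image_subset_image_iff Subtype.val_injective] at h
    exact ⟨hT, h⟩
  · rintro ⟨hT, h⟩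
    rw [← image_leafCut hT]
    exact Set.image_mono h

theorem ncard_leafCut {T : BinaryTree Unit} (hT : T.height ≤ D) :
    (leafCut D T).ncard = T.numNodes + 1 := by
  rw [← Set.ncard_image_of_injective _ Subtype.val_injective, image_leafCut hT,
    Set.ncard_coe_finset, card_leafWords, BinaryTree.numLeaves_eq_numNodes_succ]

theorem eq_of_leafCut_subset {T T' : BinaryTree Unit} (hT' : T'.height ≤ D)
    (h : leafCut D T' ⊆ leafCut D T) : T' = T := by
  refine eq_of_leafWords_subset (Finset.coe_subset.1 ?_)
  rw [← image_leafCut hT']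
  exact Set.image_subset_iff.2 h

theorem isCutIn_iff_exists_leafCut_subset :
    IsCutIn tail head Set.univ source sink M ↔
      ∃ T : BinaryTree Unit, T.height ≤ D ∧ leafCut D T ⊆ M :=
  isCutIn_iff_covers_nil.trans (exists_congr fun _ => leafWords_subset_image_iff)

theorem isMinimalCutIn_iff_exists_leafCut_eq :
    IsMinimalCutIn tail head Set.univ source sink M ↔
      ∃ T : BinaryTree Unit, T.height ≤ D ∧ leafCut D T = M := by
  constructor
  · rintro ⟨hcut, hmin⟩
    obtain ⟨T, hT, hTM⟩ := isCutIn_iff_exists_leafCut_subset.1 hcut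
    refine ⟨T, hT, hTM.eq_of_not_ssubset fun hss => hmin _ hss ?_⟩
    exact isCutIn_iff_exists_leafCut_subset.2 ⟨T, hT, subset_rfl⟩
  · rintro ⟨T, hT, rfl⟩
    refine ⟨isCutIn_iff_exists_leafCut_subset.2 ⟨T, hT, subset_rfl⟩, fun M' hM' hcut => ?_⟩
    obtain ⟨T', hT', hT'M'⟩ := isCutIn_iff_exists_leafCut_subset.1 hcut
    obtain rfl := eq_of_leafCut_subset hT' (hT'M'.trans hM'.subset)
    exact hM'.not_subset hT'M'

theorem isLatestIn_of_isMinimalCutIn (hM : IsMinimalCutIn tail head Set.univ source sink M) :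
    IsLatestIn tail head Set.univ source sink M := by
  refine ⟨hM.1, ?_⟩
  rintro ⟨M', -, ⟨hsub, hne⟩, hcard⟩
  obtain ⟨T, hT, rfl⟩ := isMinimalCutIn_iff_exists_leafCut_eq.1 hM
  have hcovers : ∀ a ∈ leafWords T, Covers (Subtype.val '' M') a := fun a ha =>
    (blocks_iff_covers ⟨a, height_le_iff_forall_length_le.1 hT a ha⟩).1 <|
      hM.blocks_of_targetSide_subset hsub ha (Set.mem_univ _)
  obtain ⟨T', hT'M', hT'T⟩ := exists_leafWords_subset_of_forall_covers hcovers
  obtain ⟨hT', hT'M'⟩ := leafWords_subset_image_iff.1 hT'M'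
  have hle : T'.numNodes ≤ T.numNodes := by
    have hcard' := (Set.ncard_le_ncard hT'M').trans hcard
    rwa [ncard_leafCut hT, ncard_leafCut hT', Nat.add_le_add_iff_right] at hcard'
  obtain rfl := hT'T.resolve_right hle.not_gt
  exact hne (by rw [Set.eq_of_subset_of_ncard_le hT'M' hcard])

theorem ncard_latest_minimalCuts_eq_catalan {n : ℕ} (hn : n ≤ D) :
    {M : Set (Arc D) | IsLatestIn tail head Set.univ source sink M ∧
      IsMinimalCutIn tail head Set.univ source sink M ∧ M.ncard = n + 1}.ncard = catalan n := by
  have hheight {T : BinaryTree Unit} (hT : T.numNodes = n) : T.height ≤ D :=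
    T.height_le_numNodes.trans (hT.trans_le hn)
  have hcuts : {M : Set (Arc D) | IsLatestIn tail head Set.univ source sink M ∧
      IsMinimalCutIn tail head Set.univ source sink M ∧ M.ncard = n + 1} =
      leafCut D '' {T | T.numNodes = n} := by
    ext M
    constructor
    · rintro ⟨-, hM, hcard⟩
      obtain ⟨T, hT, rfl⟩ := isMinimalCutIn_iff_exists_leafCut_eq.1 hM
      exact ⟨T, Nat.succ_injective ((ncard_leafCut hT).symm.trans hcard), rfl⟩
    · rintro ⟨T, rfl, rfl⟩
      have hM := isMinimalCutIn_iff_exists_leafCut_eq.2 ⟨T, hheight rfl, rfl⟩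
      exact ⟨isLatestIn_of_isMinimalCutIn hM, hM, ncard_leafCut (hheight rfl)⟩
  have hinj : Set.InjOn (leafCut D) {T | T.numNodes = n} := fun T hT T' _ h =>
    eq_of_leafCut_subset (hheight hT) h.subset
  rw [hcuts, hinj.ncard_image, ← BinaryTree.coe_treesOfNumNodesEq, Set.ncard_coe_finset,
    BinaryTree.treesOfNumNodesEq_card_eq_catalan]

end TreeGraph

end APMC

/-- The Catalan bound on the number of `s`-`t`-latest `k`-cuts is tight: for every
`k ≥ 1` there is a directed multigraph with distinct vertices `s`, `t` having exactly
`C_{k-1}` many `s`-`t`-latest `s`-`t` `k`-cuts. -/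
theorem catalan_bound_tight (k : ℕ) (hk : 1 ≤ k) :
    ∃ (V E : Type) (_ : Fintype V) (_ : Fintype E) (tl hd : E → V) (s t : V),
      s ≠ t ∧
      {M : Set E | IsLatestIn tl hd Set.univ s t M ∧
          IsMinimalCutIn tl hd Set.univ s t M ∧ M.ncard = k}.ncard
        = catalan (k - 1) := by
  obtain ⟨n, rfl⟩ := Nat.exists_eq_add_of_le' hk
  exact ⟨TreeGraph.Vertex n, TreeGraph.Arc n, Fintype.ofFinite _, Fintype.ofFinite _,
    TreeGraph.tail, TreeGraph.head, .source, .sink, nofun,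
    TreeGraph.ncard_latest_minimalCuts_eq_catalan le_rfl⟩
end

section
/- Let G be a directed multigraph with distinct vertices s, t, and let C ⊆ E be an s-t cut such that every s-t-latest cut M' satisfies M' ≥ C. Then every set M ⊆ E that is late-covering with respect to C is an s-t cut in G. -/
open APMC

namespace APMC

variable {V E : Type} {tl hd : E → V} {A C M M' : Set E} {s t : V} {e : E} {p q : List E}

theorem Walk.of_append_cons (h : Walk tl hd s t (p ++ e :: q)) : Walk tl hd (hd e) t q := by
  induction p generalizing s with
  | nil => cases h with | cons _ hq => exact hq
  | cons _ _ ih => cases h with | cons _ h' => exact ih h'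

theorem WalkIn.of_append_cons (h : WalkIn tl hd A s t (p ++ e :: q)) :
    WalkIn tl hd A (hd e) t q :=
  ⟨h.1.of_append_cons, fun f hf => h.2 f (List.mem_append_right p (List.mem_cons_of_mem e hf))⟩

theorem IsCutIn.mono (hMM' : M ⊆ M') (hM : IsCutIn tl hd A s t M) : IsCutIn tl hd A s t M' :=
  fun p hp => (hM p hp).imp fun _ he => ⟨he.1, hMM' he.2⟩

theorem IsCutIn.of_forall_mem_or_isCutIn_head (hC : IsCutIn tl hd A s t C)
    (hM : ∀ e ∈ C, e ∈ M ∨ IsCutIn tl hd A (hd e) t M) : IsCutIn tl hd A s t M := by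
  intro w hw
  obtain ⟨e, hew, heC⟩ := hC w hw
  rcases hM e heC with heM | hcut
  · exact ⟨e, hew, heM⟩
  · obtain ⟨p, q, rfl⟩ := List.append_of_mem hew
    obtain ⟨f, hfq, hfM⟩ := hcut q hw.of_append_cons
    exact ⟨f, List.mem_append_right p (List.mem_cons_of_mem e hfq), hfM⟩

end APMC

theorem lateCovering_isCut_general {V E : Type} {tl hd : E → V} {s t : V} {C M : Set E}
    (hC : IsCutIn tl hd Set.univ s t C) (hM : LateCovering tl hd t C M) :
    IsCutIn tl hd Set.univ s t M :=
  hC.of_forall_mem_or_isCutIn_head fun e he =>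
    (hM e he).imp_right fun ⟨_, hM'M, hlatest⟩ => hlatest.1.mono hM'M

/-- If `C` is an `s`-`t` cut such that every `s`-`t`-latest cut is later than `C`,
then every late-covering set with respect to `C` is an `s`-`t` cut. -/
theorem lateCovering_isCut {V E : Type} [Fintype V] [Fintype E]
    (tl hd : E → V) (s t : V) (hst : s ≠ t)
    (C : Set E) (hC : IsCutIn tl hd Set.univ s t C)
    (hCle : ∀ M' : Set E, IsLatestIn tl hd Set.univ s t M' →
      targetSide tl hd Set.univ t M' ⊆ targetSide tl hd Set.univ t C)
    (M : Set E) (hM : LateCovering tl hd t C M) :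
    IsCutIn tl hd Set.univ s t M :=
  lateCovering_isCut_general hC hM
end

section
/- Let G be a 4-partite graph with parts A, B, C, D and let H be the associated digraph. Let a ∈ A, d ∈ D with {a,d} ∈ E(G), and suppose there are no b ∈ B, c ∈ C such that a, b, c, d form a 4-clique in G. Then the node connectivity from a to d in H satisfies NC(a,d) = |B'_{a,d}| + |C'_{a,d}|. -/
/-!
Let `S` be the set of midpoints of the two-arc paths from `a` to `d` in `H`; it is a copy of
`B'_{a,d} ∪ C'_{a,d}`. These two-arc paths are pairwise internally disjoint, so the connectivity is
at least `|S|`. Conversely, every `a`-`d` path meets `S`: the only ones that are not two-arc paths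
have the form `a b c d`, and if neither `b` nor `c` were in `S`, then `{b,d}` and `{a,c}` would be
edges of `G` and `a, b, c, d` would form a `4`-clique. Disjoint paths meet `S` in distinct vertices,
so the connectivity is at most `|S|`.
-/

/-- The vertex set of the digraph `H`, the disjoint union of the four parts
`A`, `B`, `C`, `D` of the `4`-partite graph `G`. -/
inductive V4 (A B C D : Type) where
  | va : A → V4 A B C D
  | vb : B → V4 A B C D
  | vc : C → V4 A B C D
  | vd : D → V4 A B C D

/-- The arc relation of the digraph `H` associated with the `4`-partite graph `G`
whose edges between the parts are given by the relations `eAB, eBC, eCD, eAC, eBD`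
(and `eAD`, which is not used by `H`): arcs `A → B`, `B → C`, `C → D` correspond to
edges of `G`, and arcs `A → C`, `B → D` correspond to non-edges of `G`. -/
def Hadj {A B C D : Type} (eAB : A → B → Prop) (eBC : B → C → Prop)
    (eCD : C → D → Prop) (eAC : A → C → Prop) (eBD : B → D → Prop) :
    V4 A B C D → V4 A B C D → Prop
  | .va x, .vb y => eAB x y
  | .vb x, .vc y => eBC x y
  | .vc x, .vd y => eCD x y
  | .va x, .vc y => ¬ eAC x y
  | .vb x, .vd y => ¬ eBD x y
  | _, _ => False

/-- `RWalk r s t p` : `p` is the list of vertices of a directed path from `s` to `t`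
in the digraph with arc relation `r`. -/
inductive RWalk {V : Type} (r : V → V → Prop) : V → V → List V → Prop
  | nil (v : V) : RWalk r v v [v]
  | cons {u v w : V} {p : List V} : r u v → RWalk r v w p → RWalk r u w (u :: p)

/-- `P` is a family of pairwise internally vertex-disjoint directed paths from `s`
to `t`: paths in the family share no vertices other than `s` and `t`. -/
def IVDFamily {V : Type} (r : V → V → Prop) (s t : V) (P : Finset (List V)) : Prop :=
  (∀ p ∈ P, RWalk r s t p) ∧
    ∀ p ∈ P, ∀ q ∈ P, p ≠ q → ∀ v : V, v ∈ p → v ∈ q → v = s ∨ v = t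

section Digraph

variable {V : Type} {r : V → V → Prop} {s t : V} {S : Set V}

/-- The set of midpoints of two-arc paths from `s` to `t`. In `H` it is the copy of
`B'_{a,d} ∪ C'_{a,d}` inside the vertex set. -/
def midpoints (r : V → V → Prop) (s t : V) : Set V := {v | r s v ∧ r v t}

/-- `S` is an `s`-`t` vertex separator: every directed path from `s` to `t` meets `S`. The endpoints
are excluded from `S`, since internally disjoint paths all share them. -/
def IsSeparator (r : V → V → Prop) (s t : V) (S : Set V) : Prop :=
  s ∉ S ∧ t ∉ S ∧ ∀ p, RWalk r s t p → ∃ v ∈ S, v ∈ p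

lemma IVDFamily.card_le_ncard_of_isSeparator {P : Finset (List V)} (hP : IVDFamily r s t P)
    (hS : IsSeparator r s t S) (hfin : S.Finite) : P.card ≤ S.ncard := by
  obtain ⟨hwalk, hdisj⟩ := hP
  obtain ⟨hs, ht, hmeets⟩ := hS
  have : Nonempty V := ⟨s⟩
  choose! f hfS hfp using fun p hp => hmeets p (hwalk p hp)
  have hinj : Set.InjOn f P := by
    intro p hp q hq hpq
    by_contra hne
    rcases hdisj p hp q hq hne (f p) (hfp p hp) (hpq ▸ hfp q hq) with h | h
    · exact hs (h ▸ hfS p hp)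
    · exact ht (h ▸ hfS p hp)
  rw [← Set.ncard_coe_finset]
  exact Set.ncard_le_ncard_of_injOn f hfS hinj hfin

lemma exists_ivdFamily_card_eq_ncard_midpoints (hfin : (midpoints r s t).Finite) :
    ∃ P, IVDFamily r s t P ∧ P.card = (midpoints r s t).ncard := by
  classical
  have hinj : Function.Injective fun v => [s, v, t] := fun v w h => by simpa using h
  refine ⟨hfin.toFinset.image fun v => [s, v, t], ⟨?walks, ?disjoint⟩, ?card⟩
  case walks =>
    simp only [Finset.forall_mem_image, Set.Finite.mem_toFinset]
    exact fun v ⟨hsv, hvt⟩ => .cons hsv (.cons hvt (.nil t))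
  case disjoint =>
    simp only [Finset.forall_mem_image, List.mem_cons, List.not_mem_nil, or_false]
    intro v _ w _ hne x hxv hxw
    have hvw : v ≠ w := fun h => hne (h ▸ rfl)
    grind
  case card => rw [Finset.card_image_of_injective _ hinj, Set.ncard_eq_toFinset_card _ hfin]

end Digraph

section AssociatedDigraph

variable {A B C D : Type} {eAB : A → B → Prop} {eBC : B → C → Prop} {eCD : C → D → Prop}
  {eAC : A → C → Prop} {eBD : B → D → Prop} {a : A} {b : B} {c : C} {d : D}
  {p : List (V4 A B C D)}

lemma midpoints_Hadj :
    midpoints (Hadj eAB eBC eCD eAC eBD) (.va a) (.vd d) =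
      V4.vb '' {b | eAB a b ∧ ¬ eBD b d} ∪ V4.vc '' {c | ¬ eAC a c ∧ eCD c d} := by
  ext v
  cases v <;> simp [midpoints, Hadj]

lemma ncard_midpoints_Hadj (hB : {b | eAB a b ∧ ¬ eBD b d}.Finite)
    (hC : {c | ¬ eAC a c ∧ eCD c d}.Finite) :
    (midpoints (Hadj eAB eBC eCD eAC eBD) (.va a) (.vd d)).ncard =
      {b | eAB a b ∧ ¬ eBD b d}.ncard + {c | ¬ eAC a c ∧ eCD c d}.ncard := by
  have hdisj : Disjoint ((V4.vb : B → V4 A B C D) '' {b | eAB a b ∧ ¬ eBD b d})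
      (V4.vc '' {c | ¬ eAC a c ∧ eCD c d}) := by
    rw [Set.disjoint_left]
    rintro _ ⟨b, -, rfl⟩ ⟨c, -, ⟨⟩⟩
  rw [midpoints_Hadj, Set.ncard_union_eq hdisj (hB.image _) (hC.image _),
    Set.ncard_image_of_injective _ fun _ _ => V4.vb.inj,
    Set.ncard_image_of_injective _ fun _ _ => V4.vc.inj]

lemma RWalk.eq_of_source_vd {x : D} (h : RWalk (Hadj eAB eBC eCD eAC eBD) (.vd x) (.vd d) p) :
    x = d ∧ p = [.vd d] := by
  cases h with
  | nil => exact ⟨rfl, rfl⟩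
  | cons harc => exact harc.elim

lemma RWalk.eq_of_source_vc (h : RWalk (Hadj eAB eBC eCD eAC eBD) (.vc c) (.vd d) p) :
    eCD c d ∧ p = [.vc c, .vd d] := by
  cases h with
  | @cons _ v _ _ harc hrest =>
    cases v with
    | vd =>
      obtain ⟨rfl, rfl⟩ := hrest.eq_of_source_vd
      exact ⟨harc, rfl⟩
    | _ => exact harc.elim

lemma RWalk.eq_of_source_vb (h : RWalk (Hadj eAB eBC eCD eAC eBD) (.vb b) (.vd d) p) :
    (¬ eBD b d ∧ p = [.vb b, .vd d]) ∨
      ∃ c, eBC b c ∧ eCD c d ∧ p = [.vb b, .vc c, .vd d] := by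
  cases h with
  | @cons _ v _ _ harc hrest =>
    cases v with
    | vc c =>
      obtain ⟨hcd, rfl⟩ := hrest.eq_of_source_vc
      exact .inr ⟨c, harc, hcd, rfl⟩
    | vd =>
      obtain ⟨rfl, rfl⟩ := hrest.eq_of_source_vd
      exact .inl ⟨harc, rfl⟩
    | _ => exact harc.elim

lemma RWalk.eq_of_source_va (h : RWalk (Hadj eAB eBC eCD eAC eBD) (.va a) (.vd d) p) :
    (∃ b, eAB a b ∧ ¬ eBD b d ∧ p = [.va a, .vb b, .vd d]) ∨
      (∃ c, ¬ eAC a c ∧ eCD c d ∧ p = [.va a, .vc c, .vd d]) ∨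
      ∃ b c, eAB a b ∧ eBC b c ∧ eCD c d ∧ p = [.va a, .vb b, .vc c, .vd d] := by
  cases h with
  | @cons _ v _ _ harc hrest =>
    cases v with
    | vb b =>
      rcases hrest.eq_of_source_vb with ⟨hbd, rfl⟩ | ⟨c, hbc, hcd, rfl⟩
      · exact .inl ⟨b, harc, hbd, rfl⟩
      · exact .inr (.inr ⟨b, c, harc, hbc, hcd, rfl⟩)
    | vc c =>
      obtain ⟨hcd, rfl⟩ := hrest.eq_of_source_vc
      exact .inr (.inl ⟨c, harc, hcd, rfl⟩)
    | _ => exact harc.elim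

lemma isSeparator_midpoints_Hadj
    (hno : ∀ b c, eAB a b → eAC a c → eBC b c → eBD b d → ¬ eCD c d) :
    IsSeparator (Hadj eAB eBC eCD eAC eBD) (.va a) (.vd d)
      (midpoints (Hadj eAB eBC eCD eAC eBD) (.va a) (.vd d)) := by
  refine ⟨fun h => h.1, fun h => h.1, fun p hp => ?_⟩
  rcases hp.eq_of_source_va with
    ⟨b, hab, hbd, rfl⟩ | ⟨c, hac, hcd, rfl⟩ | ⟨b, c, hab, hbc, hcd, rfl⟩
  · exact ⟨.vb b, ⟨hab, hbd⟩, by simp⟩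
  · exact ⟨.vc c, ⟨hac, hcd⟩, by simp⟩
  · by_cases hbd : eBD b d
    · exact ⟨.vc c, ⟨fun hac => hno b c hab hac hbc hbd hcd, hcd⟩, by simp⟩
    · exact ⟨.vb b, ⟨hab, hbd⟩, by simp⟩

end AssociatedDigraph

theorem no_clique_node_connectivity_eq_general
    {A B C D : Type}
    (eAB : A → B → Prop) (eAC : A → C → Prop) (eAD : A → D → Prop)
    (eBC : B → C → Prop) (eBD : B → D → Prop) (eCD : C → D → Prop)
    (a : A) (d : D) (had : eAD a d)
    (hno : ¬ ∃ (b : B) (c : C),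
      eAB a b ∧ eAC a c ∧ eAD a d ∧ eBC b c ∧ eBD b d ∧ eCD c d)
    (hB : {b : B | eAB a b ∧ ¬ eBD b d}.Finite) (hC : {c : C | ¬ eAC a c ∧ eCD c d}.Finite) :
    (∃ P : Finset (List (V4 A B C D)),
        IVDFamily (Hadj eAB eBC eCD eAC eBD) (V4.va a) (V4.vd d) P ∧
        P.card = {b : B | eAB a b ∧ ¬ eBD b d}.ncard
          + {c : C | ¬ eAC a c ∧ eCD c d}.ncard) ∧
    (∀ P : Finset (List (V4 A B C D)),
        IVDFamily (Hadj eAB eBC eCD eAC eBD) (V4.va a) (V4.vd d) P →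
        P.card ≤ {b : B | eAB a b ∧ ¬ eBD b d}.ncard
          + {c : C | ¬ eAC a c ∧ eCD c d}.ncard) := by
  have hfin : (midpoints (Hadj eAB eBC eCD eAC eBD) (.va a) (.vd d)).Finite :=
    midpoints_Hadj ▸ (hB.image _).union (hC.image _)
  have hsep := isSeparator_midpoints_Hadj (eAB := eAB) (eBC := eBC) (eCD := eCD) (eAC := eAC)
    fun b c hab hac hbc hbd hcd => hno ⟨b, c, hab, hac, had, hbc, hbd, hcd⟩
  rw [← ncard_midpoints_Hadj (eBC := eBC) hB hC]
  exact ⟨exists_ivdFamily_card_eq_ncard_midpoints hfin, fun _ hP =>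
    hP.card_le_ncard_of_isSeparator hsep hfin⟩

/-- If `{a,d} ∈ E(G)` and no `b ∈ B`, `c ∈ C` complete a `4`-clique with `a` and `d`,
then the node connectivity from `a` to `d` in `H` equals `|B'_{a,d}| + |C'_{a,d}|`:
this many pairwise internally vertex-disjoint `a`-`d` paths exist, and no family of
pairwise internally vertex-disjoint `a`-`d` paths is larger. -/
theorem no_clique_node_connectivity_eq
    {A B C D : Type} [Fintype A] [Fintype B] [Fintype C] [Fintype D]
    (eAB : A → B → Prop) (eAC : A → C → Prop) (eAD : A → D → Prop)
    (eBC : B → C → Prop) (eBD : B → D → Prop) (eCD : C → D → Prop)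
    (a : A) (d : D) (had : eAD a d)
    (hno : ¬ ∃ (b : B) (c : C),
      eAB a b ∧ eAC a c ∧ eAD a d ∧ eBC b c ∧ eBD b d ∧ eCD c d) :
    (∃ P : Finset (List (V4 A B C D)),
        IVDFamily (Hadj eAB eBC eCD eAC eBD) (V4.va a) (V4.vd d) P ∧
        P.card = {b : B | eAB a b ∧ ¬ eBD b d}.ncard
          + {c : C | ¬ eAC a c ∧ eCD c d}.ncard) ∧
    (∀ P : Finset (List (V4 A B C D)),
        IVDFamily (Hadj eAB eBC eCD eAC eBD) (V4.va a) (V4.vd d) P →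
        P.card ≤ {b : B | eAB a b ∧ ¬ eBD b d}.ncard
          + {c : C | ¬ eAC a c ∧ eCD c d}.ncard) :=
  no_clique_node_connectivity_eq_general eAB eAC eAD eBC eBD eCD a d had hno
    (Set.toFinite _) (Set.toFinite _)
end
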